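/- arXiv:1904.04519 — 2 statements merged into one kernel-verified Lean document; each statement's English description precedes it below -/
import Mathlib

section
/- If G is a chordal graph, then the independence domination number iγ(G) equals the domination number γ(G). -/
variable {V : Type*} [Fintype V] [DecidableEq V]

open Finset


/-- `W` dominates the set `A` in `G`: every vertex of `A` is in `W` or adjacent to a vertex of `W`. -/
def Dominates (G : SimpleGraph V) (W A : Finset V) : Prop :=
  ∀ a ∈ A, a ∈ W ∨ ∃ w ∈ W, G.Adj w a

/-- `I` is an independent set of `G`. -/
def IndepSet (G : SimpleGraph V) (I : Finset V) : Prop :=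
  ∀ u ∈ I, ∀ v ∈ I, ¬ G.Adj u v

instance (G : SimpleGraph V) [DecidableRel G.Adj] (I : Finset V) :
    Decidable (IndepSet G I) := by unfold IndepSet; infer_instance

/-- The domination number of `G`. -/
noncomputable def gamma (G : SimpleGraph V) : ℕ :=
  sInf {k | ∃ W : Finset V, W.card = k ∧ Dominates G W Finset.univ}

/-- The independence domination number of `G`. -/
noncomputable def igamma (G : SimpleGraph V) : ℕ :=
  sInf {k | ∀ I : Finset V, IndepSet G I → ∃ W : Finset V, W.card ≤ k ∧ Dominates G W I}

/-- The noncover complex of `G`: faces are the vertex sets whose complement is not independent. -/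
def NC (G : SimpleGraph V) [DecidableRel G.Adj] : Finset (Finset V) :=
  Finset.univ.filter fun W => ¬ IndepSet G Wᶜ

/-- The independence complex of `G`. -/
def IndComplex (G : SimpleGraph V) [DecidableRel G.Adj] : Finset (Finset V) :=
  Finset.univ.filter fun I => IndepSet G I

/-- The combinatorial Alexander dual of a complex on the full vertex set `V`. -/
def AlexDual (K : Finset (Finset V)) : Finset (Finset V) :=
  Finset.univ.filter fun s => sᶜ ∉ K

/-- `K` is a simplicial complex (downward closed family of finite sets). -/
def IsComplex (K : Finset (Finset V)) : Prop :=
  ∀ σ ∈ K, ∀ τ ⊆ σ, τ ∈ K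

/-- `s` is a maximal face (facet) of `K`. -/
def IsMaxFace (K : Finset (Finset V)) (s : Finset V) : Prop :=
  s ∈ K ∧ ∀ t ∈ K, s ⊆ t → t = s

/-- `σ` is a free face of `K`: a face contained in a unique maximal face. -/
def IsFreeFace (K : Finset (Finset V)) (σ : Finset V) : Prop :=
  σ ∈ K ∧ ∃ τ ∈ K, σ ⊆ τ ∧ ∀ ρ ∈ K, σ ⊆ ρ → ρ ⊆ τ

/-- `K'` is obtained from `K` by an elementary `d`-collapse. -/
def ElemCollapse (d : ℕ) (K K' : Finset (Finset V)) : Prop :=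
  ∃ σ : Finset V, IsFreeFace K σ ∧ σ.card ≤ d ∧ K' = K.filter fun ρ => ¬ σ ⊆ ρ

/-- `K` is `d`-collapsible. -/
def Collapsible (d : ℕ) (K : Finset (Finset V)) : Prop :=
  Relation.ReflTransGen (ElemCollapse d) K ∅

/-- chordality -/
def IsChordal (G : SimpleGraph V) : Prop :=
  ∀ (u : V) (c : G.Walk u u), c.IsCycle → 4 ≤ c.length →
    ∃ x ∈ c.support, ∃ y ∈ c.support, G.Adj x y ∧ s(x, y) ∉ c.edges

/-- simplicial vertex -/
def IsSimplicialVtx (G : SimpleGraph V) (v : V) : Prop :=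
  ∀ x y : V, G.Adj v x → G.Adj v y → x ≠ y → G.Adj x y

/-!
Fix `k`. In a chordal graph, a vertex set `A` minimal among those not dominated by `k` vertices is
independent. Suppose that `u, v ∈ A` are adjacent, and choose `X` and `Y` with at most `k` vertices
dominating `A \ {u}` and `A \ {v}`. Among the neighbours of `v` in `X`, let `x` be one for which the
component `L` of `u` in `G - N[x]` is minimal. By chordality the boundary of `L` is a clique
contained in `N(x)`; it contains `v`, and it meets neither `X`, by the choice of `x`, nor `Y`, which
avoids `N[v]`. Recombine `X` and `Y` along it. Both `(Y ∩ L) ∪ (X \ L)` and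
`{v} ∪ (X ∩ L) ∪ (Y \ L)` dominate `A`, the boundary being covered by `x` and `v` respectively, and
their sizes sum to at most `2k + 1`, so one of them has at most `k` elements.
-/

section

open SimpleGraph

variable {α : Type*} {G : SimpleGraph α}

lemma exists_shorter_walk_of_chord {x y a b : α} (p : G.Walk x y) (ha : a ∈ p.support)
    (hb : b ∈ p.support) (hab : G.Adj a b) (hchord : s(a, b) ∉ p.edges) :
    ∃ q : G.Walk x y, q.length < p.length ∧ q.support ⊆ p.support ∧
      q.edges ⊆ s(a, b) :: p.edges := by
  obtain ⟨i, rfl, hi⟩ := Walk.mem_support_iff_exists_getVert.1 ha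
  obtain ⟨j, rfl, hj⟩ := Walk.mem_support_iff_exists_getVert.1 hb
  wlog hij : i ≤ j generalizing i j
  · rw [Sym2.eq_swap] at hchord ⊢
    exact this j hj hb i hi ha hab.symm hchord (le_of_not_ge hij)
  have hne : i ≠ j := fun h => hab.ne (congrArg p.getVert h)
  have hsucc : i + 1 ≠ j := by
    rintro rfl
    exact hchord (p.mk_mem_edges_iff_exists.2 ⟨i, hj, rfl⟩)
  refine ⟨(p.take i).append (.cons hab (p.drop j)), ?_, ?_, ?_⟩
  · simp only [Walk.length_append, Walk.length_cons, Walk.take_length, Walk.drop_length]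
    omega
  · intro z hz
    rw [Walk.mem_support_append_iff, Walk.support_cons, List.mem_cons] at hz
    rcases hz with hz | rfl | hz
    · exact (p.isSubwalk_take i).support_subset hz
    · exact ha
    · exact (p.isSubwalk_drop j).support_subset hz
  · intro e he
    rw [Walk.edges_append, Walk.edges_cons, List.mem_append, List.mem_cons] at he
    rcases he with he | rfl | he
    · exact List.mem_cons_of_mem _ ((p.isSubwalk_take i).edges_subset he)
    · exact List.mem_cons_self
    · exact List.mem_cons_of_mem _ ((p.isSubwalk_drop j).edges_subset he)

lemma IsChordal.exists_chord_of_isPath (hG : IsChordal G) {x y : α} (hxy : G.Adj x y)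
    {p : G.Walk x y} (hp : p.IsPath) (he : s(x, y) ∉ p.edges) (hlen : 3 ≤ p.length) :
    ∃ a ∈ p.support, ∃ b ∈ p.support, G.Adj a b ∧ s(a, b) ∉ p.edges ∧ s(a, b) ≠ s(x, y) := by
  have hcycle : (Walk.cons hxy.symm p).IsCycle :=
    (p.cons_isCycle_iff _).2 ⟨hp, by rwa [Sym2.eq_swap]⟩
  obtain ⟨a, ha, b, hb, hab, hne⟩ := hG _ _ hcycle (by simpa using hlen)
  have hsupp : ∀ c ∈ (Walk.cons hxy.symm p).support, c ∈ p.support := by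
    simp
  rw [Walk.edges_cons, List.mem_cons, not_or, Sym2.eq_swap (a := y)] at hne
  exact ⟨a, hsupp a ha, b, hsupp b hb, hab, hne.2, hne.1⟩

theorem IsChordal.exists_common_neighbor_of_walk (hG : IsChordal G) {x y : α} (hxy : G.Adj x y)
    (p : G.Walk x y) (he : s(x, y) ∉ p.edges) : ∃ z ∈ p.support, G.Adj x z ∧ G.Adj z y := by
  classical
  induction hn : p.length using Nat.strong_induction_on generalizing p with
  | _ n ih =>
    subst hn
    have shorten : ∀ q : G.Walk x y, q.length < p.length → q.support ⊆ p.support →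
        s(x, y) ∉ q.edges → ∃ z ∈ p.support, G.Adj x z ∧ G.Adj z y := fun q hq hsupp heq =>
      let ⟨z, hz, hadj⟩ := ih _ hq q heq rfl
      ⟨z, hsupp hz, hadj⟩
    by_cases hp : p.IsPath
    · by_cases hlen : 3 ≤ p.length
      · obtain ⟨a, ha, b, hb, hab, hchord, hne⟩ := hG.exists_chord_of_isPath hxy hp he hlen
        obtain ⟨q, hq, hsupp, hedges⟩ := exists_shorter_walk_of_chord p ha hb hab hchord
        refine shorten q hq hsupp fun h => ?_
        rcases List.mem_cons.1 (hedges h) with h | h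
        · exact hne h.symm
        · exact he h
      · match p with
        | .nil => exact absurd rfl hxy.ne
        | .cons _ .nil => simp at he
        | .cons hxz (.cons hzy .nil) => exact ⟨_, by simp, hxz, hzy⟩
        | .cons _ (.cons _ (.cons _ _)) => simp at hlen
    · refine shorten p.bypass ?_ p.support_bypass_subset_support
        fun h => he (p.edges_bypass_subset_edges h)
      by_contra! hle
      exact hp (p.bypass_eq_self_of_length_le_length_bypass hle ▸ p.bypass_isPath)

/-- The outer vertex boundary of `L`: the vertices outside `L` with a neighbour in `L`. It
separates `L` from the remaining vertices. -/
def vertexBoundary (G : SimpleGraph α) (L : Set α) : Set α :=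
  {w | w ∉ L ∧ ∃ c ∈ L, G.Adj c w}

lemma exists_walk_of_mem_vertexBoundary {L : Set α} (hL : (G.induce L).Preconnected) {y z : α}
    (hy : y ∈ vertexBoundary G L) (hz : z ∈ vertexBoundary G L) :
    ∃ p : G.Walk y z, ∀ a ∈ p.support, a = y ∨ a ∈ L ∨ a = z := by
  obtain ⟨-, c, hc, hcy⟩ := hy
  obtain ⟨-, d, hd, hdz⟩ := hz
  obtain ⟨r⟩ := hL ⟨c, hc⟩ ⟨d, hd⟩
  let q : G.Walk c d := r.map (Embedding.induce L).toHom
  have hq : ∀ a ∈ q.support, a ∈ L := by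
    intro a ha
    obtain ⟨b, -, rfl⟩ := List.mem_map.1 (Walk.support_map _ r ▸ ha)
    exact b.2
  refine ⟨.cons hcy.symm (q.concat hdz), fun a ha => ?_⟩
  simp only [Walk.support_cons, Walk.support_concat, List.mem_cons, List.mem_append,
    List.not_mem_nil, or_false] at ha
  exact ha.imp_right (Or.imp_left (hq a))

theorem IsChordal.isClique_vertexBoundary (hG : IsChordal G) {x : α} {L : Set α}
    (hL : (G.induce L).Preconnected) (hxL : x ∉ L) (hdisj : Disjoint (G.neighborSet x) L)
    (hbd : vertexBoundary G L ⊆ G.neighborSet x) : G.IsClique (vertexBoundary G L) := by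
  intro y hy z hz hyz
  have hxy : G.Adj x y := hbd hy
  have hxz : G.Adj x z := hbd hz
  obtain ⟨p, hp⟩ := exists_walk_of_mem_vertexBoundary hL hy hz
  have hxp : x ∉ p.support := by
    intro hx
    rcases hp x hx with rfl | hx | rfl
    exacts [hxy.ne rfl, hxL hx, hxz.ne rfl]
  have he : s(x, z) ∉ (Walk.cons hxy p).edges := by
    rw [Walk.edges_cons, List.mem_cons, not_or]
    exact ⟨fun h => hyz (Sym2.congr_right.1 h).symm,
      fun h => hxp (p.fst_mem_support_of_mem_edges h)⟩
  obtain ⟨a, ha, hxa, haz⟩ := hG.exists_common_neighbor_of_walk hxz (.cons hxy p) he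
  rw [Walk.support_cons, List.mem_cons] at ha
  rcases hp a (ha.resolve_left hxa.ne') with rfl | haL | rfl
  · exact haz
  · exact absurd haL (hdisj.notMem_of_mem_left hxa)
  · exact absurd rfl haz.ne

/-- The component of `u` in the graph obtained from `G` by deleting the vertices in `S`. It is kept
as a set of vertices of `G`, and it is empty when `u ∈ S`. -/
def componentAvoiding (G : SimpleGraph α) (S : Set α) (u : α) : Set α :=
  {w | ∃ p : G.Walk u w, ∀ a ∈ p.support, a ∉ S}

section componentAvoiding

variable {S : Set α} {u : α}

lemma self_mem_componentAvoiding (hu : u ∉ S) : u ∈ componentAvoiding G S u :=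
  ⟨.nil, by simpa using hu⟩

lemma disjoint_componentAvoiding : Disjoint S (componentAvoiding G S u) :=
  Set.disjoint_right.2 fun _ ⟨p, hp⟩ => hp _ p.end_mem_support

lemma vertexBoundary_componentAvoiding_subset :
    vertexBoundary G (componentAvoiding G S u) ⊆ S := by
  rintro w ⟨hw, c, ⟨p, hp⟩, hcw⟩
  by_contra hwS
  refine hw ⟨p.concat hcw, fun a ha => ?_⟩
  rw [Walk.support_concat, List.mem_append, List.mem_singleton] at ha
  rcases ha with ha | rfl
  exacts [hp a ha, hwS]

lemma preconnected_induce_componentAvoiding :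
    (G.induce (componentAvoiding G S u)).Preconnected := by
  classical
  rintro ⟨v, p, hp⟩ w
  have hu : u ∈ componentAvoiding G S u :=
    self_mem_componentAvoiding (hp u p.start_mem_support)
  refine (induce_connected_of_patches u hu ?_).preconnected _ w
  rintro w ⟨q, hq⟩
  exact ⟨{a | a ∈ q.support},
    fun a ha => ⟨q.takeUntil a ha, fun b hb => hq b (q.support_takeUntil_subset_support ha hb)⟩,
    q.start_mem_support, q.end_mem_support, q.connected_induce_support.preconnected _ _⟩

lemma componentAvoiding_subset {L : Set α} (hu : u ∈ L) (hS : vertexBoundary G L ⊆ S) :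
    componentAvoiding G S u ⊆ L := by
  rintro w ⟨p, hp⟩
  induction p with
  | nil => exact hu
  | @cons u c w huc p ih =>
    have hc : c ∉ S := hp c (by simp)
    refine ih ?_ fun a ha => hp a (by simp [ha])
    by_contra hcL
    exact hc (hS ⟨hcL, u, hu, huc⟩)

end componentAvoiding

theorem IsChordal.exists_clique_separator (hG : IsChordal G) {X : Finset α} {u v : α}
    (huX : u ∉ X) (hXu : ∀ x ∈ X, ¬ G.Adj x u) (huv : G.Adj u v) (hvX : ∃ x ∈ X, G.Adj x v) :
    ∃ x ∈ X, ∃ L : Set α, u ∈ L ∧ x ∉ L ∧ v ∈ vertexBoundary G L ∧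
      G.IsClique (vertexBoundary G L) ∧ vertexBoundary G L ⊆ G.neighborSet x ∧
      Disjoint (X : Set α) (vertexBoundary G L) := by
  let comp (x : α) : Set α := componentAvoiding G (insert x (G.neighborSet x)) u
  obtain ⟨x, ⟨hx, hxv⟩, hmin⟩ :=
    (X.finite_toSet.subset (Set.sep_subset _ (G.Adj · v))).exists_minimalFor comp _ hvX
  have huL {y : α} (hy : y ∈ X) : u ∈ comp y := by
    refine self_mem_componentAvoiding ?_
    rintro (rfl | huy)
    exacts [huX hy, hXu y hy huy]
  have hdisj (y : α) : Disjoint (insert y (G.neighborSet y)) (comp y) := disjoint_componentAvoiding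
  have hself (y : α) : y ∉ comp y := (hdisj y).notMem_of_mem_left (Set.mem_insert _ _)
  have hnbr {y c : α} (hc : c ∈ comp y) : ¬ G.Adj y c := fun h =>
    (hdisj y).notMem_of_mem_left (Set.mem_insert_of_mem _ h) hc
  have hbd : vertexBoundary G (comp x) ⊆ G.neighborSet x := by
    intro w hw
    rcases vertexBoundary_componentAvoiding_subset hw with rfl | hxw
    · obtain ⟨-, c, hc, hcw⟩ := hw
      exact absurd hcw.symm (hnbr hc)
    · exact hxw
  have hclique : G.IsClique (vertexBoundary G (comp x)) :=
    hG.isClique_vertexBoundary preconnected_induce_componentAvoiding (hself x)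
      ((hdisj x).mono_left (Set.subset_insert _ _)) hbd
  have hvbd : v ∈ vertexBoundary G (comp x) := ⟨fun h => hnbr h hxv, u, huL hx, huv⟩
  refine ⟨x, hx, comp x, huL hx, hself x, hvbd, hclique, hbd, ?_⟩
  refine Set.disjoint_left.2 fun y hy hyL => ?_
  -- Otherwise `y` would be a choice of `x` cutting off a smaller component.
  have hyv : G.Adj y v := hclique hyL hvbd fun h => hXu y hy (h ▸ huv.symm)
  have hsub : comp y ⊆ comp x := componentAvoiding_subset (huL hx) fun w hw =>
    or_iff_not_imp_left.2 fun hwy => hclique hyL hw (Ne.symm hwy)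
  obtain ⟨-, c, hc, hcy⟩ := hyL
  exact hnbr (hmin ⟨hy, hyv⟩ hsub hc) hcy.symm

lemma Dominates.mono {X Y A B : Finset α} (h : Dominates G X A) (hXY : X ⊆ Y) (hBA : B ⊆ A) :
    Dominates G Y B := fun a ha =>
  (h a (hBA ha)).imp (@hXY a) fun ⟨x, hx, hxa⟩ => ⟨x, hXY hx, hxa⟩

section splice

variable [DecidableEq α] (L : Set α) [DecidablePred (· ∈ L)]

/-- The set that agrees with `X` inside `L` and with `Y` outside `L`; it recombines two dominating
sets along a separator. -/
def splice (X Y : Finset α) : Finset α :=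
  {x ∈ X | x ∈ L} ∪ {y ∈ Y | y ∉ L}

lemma card_splice_add_card_splice_le (X Y : Finset α) :
    #(splice L X Y) + #(splice L Y X) ≤ #X + #Y := by
  have hX := card_filter_add_card_filter_not (s := X) (· ∈ L)
  have hY := card_filter_add_card_filter_not (s := Y) (· ∈ L)
  have hXY : #(splice L X Y) ≤ _ := card_union_le _ _
  have hYX : #(splice L Y X) ≤ _ := card_union_le _ _
  omega

variable {L}

lemma Dominates.splice {X Y A : Finset α} (hX : Dominates G X {a ∈ A | a ∈ L})
    (hY : Dominates G Y {a ∈ A | a ∉ L}) (hXL : Disjoint (X : Set α) (vertexBoundary G L))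
    (hAL : Disjoint (A : Set α) (vertexBoundary G L)) : Dominates G (splice L X Y) A := by
  intro a ha
  simp only [_root_.splice, mem_union, mem_filter]
  by_cases haL : a ∈ L
  · refine (hX a (mem_filter.2 ⟨ha, haL⟩)).imp (fun haX => .inl ⟨haX, haL⟩) ?_
    rintro ⟨x, hx, hxa⟩
    have hxL : x ∈ L := by
      by_contra hxL
      exact hXL.notMem_of_mem_left hx ⟨hxL, a, haL, hxa.symm⟩
    exact ⟨x, .inl ⟨hx, hxL⟩, hxa⟩
  · refine (hY a (mem_filter.2 ⟨ha, haL⟩)).imp (fun haY => .inr ⟨haY, haL⟩) ?_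
    rintro ⟨y, hy, hya⟩
    exact ⟨y, .inr ⟨hy, fun hyL => hAL.notMem_of_mem_left ha ⟨haL, y, hyL, hya⟩⟩, hya⟩

end splice

theorem exists_card_le_dominates_of_separator [DecidableEq α] {A X Y : Finset α} {L : Set α}
    {u v x : α} {k : ℕ} (hX : Dominates G X (A.erase u)) (hY : Dominates G Y (A.erase v))
    (hXk : #X ≤ k) (hYk : #Y ≤ k) (huL : u ∈ L) (hv : v ∈ vertexBoundary G L) (huv : G.Adj u v)
    (hclique : G.IsClique (vertexBoundary G L)) (hx : x ∈ X) (hxL : x ∉ L)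
    (hxbd : vertexBoundary G L ⊆ G.neighborSet x)
    (hXL : Disjoint (X : Set α) (vertexBoundary G L))
    (hYL : Disjoint (Y : Set α) (vertexBoundary G L)) : ∃ W, #W ≤ k ∧ Dominates G W A := by
  classical
  let B : Finset α := {a ∈ A | a ∉ vertexBoundary G L}
  have hB : Disjoint (B : Set α) (vertexBoundary G L) :=
    Set.disjoint_left.2 fun a ha => (mem_filter.1 ha).2
  have hYX : Dominates G (splice L Y X) B := by
    refine .splice (hY.mono subset_rfl ?_) (hX.mono subset_rfl ?_) hYL hB <;> grind [hv.1]
  have hXY : Dominates G (splice L X Y) (B.erase u) := by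
    refine .splice (hX.mono subset_rfl ?_) (hY.mono subset_rfl ?_) hXL
      (hB.mono_left (erase_subset _ _)) <;> grind
  have hcard := card_splice_add_card_splice_le L X Y
  by_cases hk : #(splice L Y X) ≤ k
  · refine ⟨splice L Y X, hk, fun a ha => ?_⟩
    by_cases habd : a ∈ vertexBoundary G L
    · exact .inr ⟨x, by simp [splice, hx, hxL], hxbd habd⟩
    · exact hYX a (mem_filter.2 ⟨ha, habd⟩)
  · refine ⟨insert v (splice L X Y), (card_insert_le _ _).trans (by omega), fun a ha => ?_⟩
    rcases eq_or_ne a v with rfl | hav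
    · exact .inl (mem_insert_self _ _)
    rcases eq_or_ne a u with rfl | hau
    · exact .inr ⟨v, mem_insert_self _ _, huv.symm⟩
    by_cases habd : a ∈ vertexBoundary G L
    · exact .inr ⟨v, mem_insert_self _ _, hclique hv habd hav.symm⟩
    · exact hXY.mono (subset_insert _ _) subset_rfl a
        (mem_erase.2 ⟨hau, mem_filter.2 ⟨ha, habd⟩⟩)

theorem IsChordal.indepSet_of_minimal_dominates_lt (hG : IsChordal G) {k : ℕ} {A : Finset α}
    (hA : Minimal (fun A => ∀ W, Dominates G W A → k < #W) A) : IndepSet G A := by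
  classical
  intro u hu v hv huv
  have critical {a : α} (ha : a ∈ A) : ∃ X, #X ≤ k ∧ Dominates G X (A.erase a) := by
    have := hA.not_prop_of_lt (erase_ssubset ha)
    push Not at this
    obtain ⟨X, hX, hXk⟩ := this
    exact ⟨X, hXk, hX⟩
  have undominated {a : α} {X : Finset α} (hXk : #X ≤ k) (hX : Dominates G X (A.erase a)) :
      a ∉ X ∧ ∀ x ∈ X, ¬ G.Adj x a := by
    by_contra! hXa
    refine hXk.not_gt (hA.prop X fun b hb => ?_)
    rcases eq_or_ne b a with rfl | hba
    · exact or_iff_not_imp_left.2 hXa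
    · exact hX b (mem_erase.2 ⟨hba, hb⟩)
  obtain ⟨X, hXk, hX⟩ := critical hu
  obtain ⟨Y, hYk, hY⟩ := critical hv
  obtain ⟨huX, hXu⟩ := undominated hXk hX
  obtain ⟨hvY, hYv⟩ := undominated hYk hY
  have hvX : v ∉ X := fun h => hXu v h huv.symm
  have hXv : ∃ x ∈ X, G.Adj x v := (hX v (mem_erase.2 ⟨huv.ne', hv⟩)).resolve_left hvX
  obtain ⟨x, hx, L, huL, hxL, hvL, hclique, hxbd, hXL⟩ :=
    hG.exists_clique_separator huX hXu huv hXv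
  have hYL : Disjoint (Y : Set α) (vertexBoundary G L) := Set.disjoint_left.2 fun y hy hyL =>
    hYv y hy (hclique hyL hvL fun h => hvY (h ▸ hy))
  obtain ⟨W, hWk, hW⟩ :=
    exists_card_le_dominates_of_separator hX hY hXk hYk huL hvL huv hclique hx hxL hxbd hXL hYL
  exact hWk.not_gt (hA.prop W hW)

theorem igamma_eq_gamma_of_chordal_general (hG : IsChordal G) (k : ℕ) :
    (∀ I, IndepSet G I → ∃ W, #W ≤ k ∧ Dominates G W I) ↔ ∀ A, ∃ W, #W ≤ k ∧ Dominates G W A := by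
  refine ⟨fun hk A => ?_, fun hk I _ => hk I⟩
  by_contra! hA
  obtain ⟨I, -, hI⟩ := exists_minimal_le_of_wellFoundedLT
    (fun A => ∀ W, Dominates G W A → k < #W) A fun W hW => not_le.1 fun h => hA W h hW
  obtain ⟨W, hWk, hW⟩ := hk I (hG.indepSet_of_minimal_dominates_lt hI)
  exact hWk.not_gt (hI.prop W hW)

lemma dominates_univ [Fintype α] (A : Finset α) : Dominates G univ A := fun a _ => .inl (mem_univ a)

lemma gamma_le_iff [Fintype α] {k : ℕ} : gamma G ≤ k ↔ ∀ A, ∃ W, #W ≤ k ∧ Dominates G W A := by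
  constructor
  · intro hk A
    obtain ⟨W, hWk, hW⟩ : ∃ W, #W = gamma G ∧ Dominates G W univ :=
      Nat.sInf_mem (s := {k | ∃ W, #W = k ∧ Dominates G W univ}) ⟨_, univ, rfl, dominates_univ _⟩
    exact ⟨W, hWk.trans_le hk, hW.mono subset_rfl (subset_univ A)⟩
  · intro hk
    obtain ⟨W, hWk, hW⟩ := hk univ
    have hγ : gamma G ≤ #W := Nat.sInf_le ⟨W, rfl, hW⟩
    exact hγ.trans hWk

lemma igamma_le_iff [Finite α] {k : ℕ} :
    igamma G ≤ k ↔ ∀ I, IndepSet G I → ∃ W, #W ≤ k ∧ Dominates G W I := by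
  cases nonempty_fintype α
  refine ⟨fun hk I hI => ?_, fun hk => Nat.sInf_le hk⟩
  have higamma : ∀ I, IndepSet G I → ∃ W, #W ≤ igamma G ∧ Dominates G W I :=
    Nat.sInf_mem (s := {k | ∀ I, IndepSet G I → ∃ W, #W ≤ k ∧ Dominates G W I})
      ⟨_, fun I _ => ⟨univ, le_rfl, dominates_univ I⟩⟩
  obtain ⟨W, hWk, hW⟩ := higamma I hI
  exact ⟨W, hWk.trans hk, hW⟩

end

/-- For chordal graphs, `iγ(G) = γ(G)`. -/
theorem igamma_eq_gamma_of_chordal (G : SimpleGraph V) (hG : IsChordal G) :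
    igamma G = gamma G := by
  refine eq_of_forall_ge_iff fun k => ?_
  rw [igamma_le_iff, gamma_le_iff, igamma_eq_gamma_of_chordal_general hG]
end

section
/- Let G be a chordal graph on n vertices (not necessarily connected) with no isolated vertices, and suppose the statement 'NC(H) is (|V(H)| − γ(H) − 1)-collapsible' holds for each connected component H of G. Then NC(G) is (n − γ(G) − 1)-collapsible. -/
variable {V : Type*} [Fintype V] [DecidableEq V]

open Finset


/-!
If `K ↘ K'` and `L ↘ L'` are collapses in dimensions `k` and `l`, then the join `K * L` collapses to
`K' * L ∪ K * L'` in dimension `k + l`: each pair of elementary steps, removing the faces above `σ`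
and `σ'`, is one elementary step of the join, removing the faces above `σ ∪ σ'`.

For a chordal graph on `U`, the full simplex `2 ^ U` collapses to `NC` in dimension `|U| - γ`.
Indeed the graph is vertex decomposable: unless it is edgeless, some edge `xy` has `N[x] ⊆ N[y]`,
and then `y` is a shedding vertex; otherwise each edge `xy` could be followed by an edge `yz` with
`z ∉ N[x]`, and a shortest return of such an infinite walk would close an induced cycle of length at
least 4. Split the faces by whether they contain `y`: deleting `y` handles the first kind, deleting
`N[y]` the second. The dimension is at most `|U| - |F|`, for `F` a smallest independent dominating
set of `U`: if `F` is independent and dominating after deleting `y`, it is so in `U` because `y` is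
shedding, and if it is so after deleting `N[y]`, then `F ∪ {y}` is so in `U`.

The noncover complex of a disjoint union of graphs on `U` and `U'` is `NC * 2 ^ U' ∪ 2 ^ U * NC'`.
Collapsing `2 ^ U` to `NC` and `NC'` to the void complex reduces it to `NC * 2 ^ U'`, and collapsing
`NC` to the void complex finishes. Both dimensions are at most the sum of the bounds `|U| - γ` and
`|U'| - γ'`, less one.
-/

open scoped FinsetFamily

theorem isComplex_powerset {α : Type*} (U : Finset α) : IsComplex U.powerset :=
  fun _ hσ _ hτ => mem_powerset.2 (hτ.trans (mem_powerset.1 hσ))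

section Collapse

variable {α β : Type*} [DecidableEq α] [DecidableEq β] {d k l : ℕ}
  {A B C K K' K'' : Finset (Finset α)}

/-- `K` reduces to `K'` by a sequence of elementary `d`-collapses; `Collapsible d K` is the case
where `K'` is the void complex. -/
def CollapsesTo (d : ℕ) (K K' : Finset (Finset α)) : Prop :=
  Relation.ReflTransGen (ElemCollapse d) K K'

theorem ElemCollapse.mono (hkl : k ≤ l) (h : ElemCollapse k K K') : ElemCollapse l K K' := by
  obtain ⟨σ, hσ, hk, rfl⟩ := h
  exact ⟨σ, hσ, hk.trans hkl, rfl⟩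

theorem ElemCollapse.subset (h : ElemCollapse d K K') : K' ⊆ K := by
  obtain ⟨σ, -, -, rfl⟩ := h
  exact filter_subset _ _

theorem ElemCollapse.isComplex (h : ElemCollapse d K K') (hK : IsComplex K) : IsComplex K' := by
  obtain ⟨σ, -, -, rfl⟩ := h
  intro ρ hρ ρ' hρ'
  rw [mem_filter] at hρ ⊢
  exact ⟨hK ρ hρ.1 ρ' hρ', fun hσ => hρ.2 (hσ.trans hρ')⟩

theorem ElemCollapse.union_right (hC : IsComplex C) (hAC : A ∩ C ⊆ B) (h : ElemCollapse d A B) :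
    ElemCollapse d (A ∪ C) (B ∪ C) := by
  obtain ⟨σ, ⟨hσ, τ, hτ, hστ, hmax⟩, hd, rfl⟩ := h
  have hσC : ∀ ρ ∈ C, ¬ σ ⊆ ρ := fun ρ hρ hσρ =>
    (mem_filter.1 (hAC (mem_inter.2 ⟨hσ, hC ρ hρ σ hσρ⟩))).2 Subset.rfl
  refine ⟨σ, ⟨mem_union_left _ hσ, τ, mem_union_left _ hτ, hστ, fun ρ hρ hσρ => ?_⟩, hd, ?_⟩
  · exact hmax ρ ((mem_union.1 hρ).resolve_right fun hρC => hσC ρ hρC hσρ) hσρ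
  · rw [filter_union, filter_true_of_mem hσC]

theorem ElemCollapse.map (f : α ↪ β) (h : ElemCollapse d K K') :
    ElemCollapse d (K.map (mapEmbedding f).toEmbedding) (K'.map (mapEmbedding f).toEmbedding) := by
  obtain ⟨σ, ⟨hσ, τ, hτ, hστ, hmax⟩, hd, rfl⟩ := h
  refine ⟨σ.map f, ⟨mem_map_of_mem _ hσ, τ.map f, mem_map_of_mem _ hτ, map_subset_map.2 hστ, ?_⟩,
    (card_map f).trans_le hd, ?_⟩
  · rw [forall_mem_map]
    exact fun ρ hρ hσρ => map_subset_map.2 (hmax ρ hρ (map_subset_map.1 hσρ))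
  · simp only [filter_map, Function.comp_def, RelEmbedding.coe_toEmbedding, mapEmbedding_apply,
      map_subset_map]

namespace CollapsesTo

theorem mono (hkl : k ≤ l) (h : CollapsesTo k K K') : CollapsesTo l K K' :=
  Relation.ReflTransGen.mono (fun _ _ => ElemCollapse.mono hkl) _ _ h

theorem trans (h : CollapsesTo d K K') (h' : CollapsesTo d K' K'') : CollapsesTo d K K'' :=
  Relation.ReflTransGen.trans h h'

theorem subset (h : CollapsesTo d K K') : K' ⊆ K := by
  induction h with
  | refl => exact Subset.rfl
  | tail _ h ih => exact h.subset.trans ih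

theorem isComplex (h : CollapsesTo d K K') (hK : IsComplex K) : IsComplex K' := by
  induction h with
  | refl => exact hK
  | tail _ h ih => exact h.isComplex ih

theorem union_right (hC : IsComplex C) (h : CollapsesTo d A B) (hAC : A ∩ C ⊆ B) :
    CollapsesTo d (A ∪ C) (B ∪ C) := by
  induction h using Relation.ReflTransGen.head_induction_on with
  | refl => exact Relation.ReflTransGen.refl
  | @head A A' hA hB ih =>
    have hBA : B ⊆ A' := CollapsesTo.subset hB
    exact .head (hA.union_right hC (hAC.trans hBA))
      (ih ((inter_subset_inter_right hA.subset).trans hAC))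

theorem map (f : α ↪ β) (h : CollapsesTo d K K') :
    CollapsesTo d (K.map (mapEmbedding f).toEmbedding) (K'.map (mapEmbedding f).toEmbedding) :=
  Relation.ReflTransGen.lift (p := ElemCollapse d)
    (fun K : Finset (Finset α) => K.map (mapEmbedding f).toEmbedding)
    (fun _ _ => ElemCollapse.map f) _ _ h

end CollapsesTo

theorem powerset_collapsesTo_ssubsets (N : Finset α) :
    CollapsesTo #N N.powerset N.ssubsets := by
  refine .single ⟨N, ⟨mem_powerset_self N, N, mem_powerset_self N, Subset.rfl, ?_⟩, le_rfl, ?_⟩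
  · exact fun ρ hρ _ => mem_powerset.1 hρ
  · ext ρ
    rw [mem_ssubsets, mem_filter, mem_powerset, ssubset_iff_subset_not_subset]

theorem collapsible_powerset (U : Finset α) : Collapsible 0 U.powerset := by
  refine .single ⟨∅, ⟨empty_mem_powerset U, U, mem_powerset_self U, empty_subset U, ?_⟩,
    card_empty.le, ?_⟩
  · exact fun ρ hρ _ => mem_powerset.1 hρ
  · simp only [empty_subset, not_true_eq_false, filter_false]

end Collapse

section Join

variable {α : Type*} [DecidableEq α] {d k l : ℕ} {U U' W : Finset α}
  {K K' K'' L L' : Finset (Finset α)}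

theorem IsComplex.sups (hK : IsComplex K) (hL : IsComplex L) : IsComplex (K ⊻ L) := by
  intro ρ hρ ρ' hρ'
  obtain ⟨σ, hσ, τ, hτ, rfl⟩ := mem_sups.1 hρ
  refine mem_sups.2 ⟨ρ' ∩ σ, hK σ hσ _ inter_subset_right, ρ' ∩ τ, hL τ hτ _ inter_subset_right, ?_⟩
  rw [sup_eq_union, ← inter_union_distrib_left, inter_eq_left]
  exact hρ'

theorem mem_sups_iff_inter_mem (hU : Disjoint U U') (hK : K ⊆ U.powerset)
    (hL : L ⊆ U'.powerset) :
    W ∈ K ⊻ L ↔ W ⊆ U ∪ U' ∧ W ∩ U ∈ K ∧ W ∩ U' ∈ L := by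
  constructor
  · intro hW
    obtain ⟨σ, hσ, τ, hτ, rfl⟩ := mem_sups.1 hW
    have hσU := mem_powerset.1 (hK hσ)
    have hτU := mem_powerset.1 (hL hτ)
    have hτU_empty : τ ∩ U = ∅ := disjoint_iff_inter_eq_empty.1 (hU.symm.mono_left hτU)
    have hσU'_empty : σ ∩ U' = ∅ := disjoint_iff_inter_eq_empty.1 (hU.mono_left hσU)
    rw [sup_eq_union, union_inter_distrib_right, union_inter_distrib_right, inter_eq_left.2 hσU,
      inter_eq_left.2 hτU, hτU_empty, hσU'_empty, union_empty, empty_union]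
    exact ⟨union_subset_union hσU hτU, hσ, hτ⟩
  · rintro ⟨hW, hWU, hWU'⟩
    refine mem_sups.2 ⟨W ∩ U, hWU, W ∩ U', hWU', ?_⟩
    rwa [sup_eq_union, ← inter_union_distrib_left, inter_eq_left]

theorem mem_sups_powerset_union_powerset_sups_iff (hU : Disjoint U U') (hK : K ⊆ U.powerset)
    (hL : L ⊆ U'.powerset) :
    W ∈ K ⊻ U'.powerset ∪ U.powerset ⊻ L ↔ W ⊆ U ∪ U' ∧ (W ∩ U ∈ K ∨ W ∩ U' ∈ L) := by
  simp only [mem_union, mem_sups_iff_inter_mem hU hK Subset.rfl,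
    mem_sups_iff_inter_mem hU Subset.rfl hL, mem_powerset, inter_subset_right, and_true, true_and,
    and_or_left]

theorem sups_inter_sups_subset (hU : Disjoint U U') (hK : K ⊆ U.powerset)
    (hK' : K' ⊆ U.powerset) (hL : L ⊆ U'.powerset) (hL' : L' ⊆ U'.powerset) :
    (K ⊻ L) ∩ (K' ⊻ L') ⊆ K ⊻ L' := by
  intro W hW
  rw [mem_inter, mem_sups_iff_inter_mem hU hK hL, mem_sups_iff_inter_mem hU hK' hL'] at hW
  exact (mem_sups_iff_inter_mem hU hK hL').2 ⟨hW.1.1, hW.1.2.1, hW.2.2.2⟩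

theorem ElemCollapse.sups (hU : Disjoint U U') (hKU : K ⊆ U.powerset) (hLU : L ⊆ U'.powerset)
    (hK : ElemCollapse k K K') (hL : ElemCollapse l L L') :
    ElemCollapse (k + l) (K ⊻ L) (K' ⊻ L ∪ K ⊻ L') := by
  have hK'U := hK.subset.trans hKU
  have hL'U := hL.subset.trans hLU
  obtain ⟨σ, ⟨hσ, τ, hτ, hστ, hmax⟩, hk, rfl⟩ := hK
  obtain ⟨σ', ⟨hσ', τ', hτ', hστ', hmax'⟩, hl, rfl⟩ := hL
  have hσ_union (W : Finset α) : σ ∪ σ' ⊆ W ↔ σ ⊆ W ∩ U ∧ σ' ⊆ W ∩ U' := by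
    simp only [union_subset_iff, subset_inter_iff, mem_powerset.1 (hKU hσ),
      mem_powerset.1 (hLU hσ'), and_true]
  refine ⟨σ ∪ σ', ⟨sup_mem_sups hσ hσ', τ ∪ τ', sup_mem_sups hτ hτ',
    union_subset_union hστ hστ', fun ρ hρ hσρ => ?_⟩, (card_union_le _ _).trans (by omega), ?_⟩
  · obtain ⟨hρU, hρK, hρL⟩ := (mem_sups_iff_inter_mem hU hKU hLU).1 hρ
    obtain ⟨hσρ, hσ'ρ⟩ := (hσ_union ρ).1 hσρ
    calc ρ = ρ ∩ U ∪ ρ ∩ U' := by rw [← inter_union_distrib_left, inter_eq_left.2 hρU]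
      _ ⊆ τ ∪ τ' := union_subset_union (hmax _ hρK hσρ) (hmax' _ hρL hσ'ρ)
  · ext W
    rw [mem_union, mem_filter, mem_sups_iff_inter_mem hU hK'U hLU,
      mem_sups_iff_inter_mem hU hKU hL'U, mem_sups_iff_inter_mem hU hKU hLU, hσ_union, mem_filter,
      mem_filter]
    tauto

theorem CollapsesTo.sups_trans (hU : Disjoint U U') (hKU : K ⊆ U.powerset)
    (hLU : L ⊆ U'.powerset) (hK : IsComplex K) (hL' : IsComplex L') (hLL : L' ⊆ L) (hKK : K' ⊆ K)
    (h : CollapsesTo d (K ⊻ L) (K' ⊻ L ∪ K ⊻ L'))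
    (h' : CollapsesTo d (K' ⊻ L) (K'' ⊻ L ∪ K' ⊻ L')) :
    CollapsesTo d (K ⊻ L) (K'' ⊻ L ∪ K ⊻ L') := by
  have hinter : K' ⊻ L ∩ (K ⊻ L') ⊆ K'' ⊻ L ∪ K' ⊻ L' :=
    (sups_inter_sups_subset hU (hKK.trans hKU) hKU hLU (hLL.trans hLU)).trans subset_union_right
  -- The second collapse only removes faces outside `K ⊻ L'`, so it can be run in its presence.
  have h'_union := h'.union_right (hK.sups hL') hinter
  rw [union_assoc, union_eq_right.2 (sups_subset_right hKK)] at h'_union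
  exact h.trans h'_union

theorem CollapsesTo.sups_elemCollapse (hU : Disjoint U U') (hKU : K ⊆ U.powerset)
    (hLU : L ⊆ U'.powerset) (hK : IsComplex K) (hL : IsComplex L) (hKK : CollapsesTo k K K')
    (hLL : ElemCollapse l L L') : CollapsesTo (k + l) (K ⊻ L) (K' ⊻ L ∪ K ⊻ L') := by
  induction hKK using Relation.ReflTransGen.head_induction_on with
  | refl =>
    rw [union_eq_left.2 (sups_subset_left hLL.subset)]
    exact .refl
  | @head K K₀ hKK₀ _ ih =>
    exact .sups_trans hU hKU hLU hK (hLL.isComplex hL) hLL.subset hKK₀.subset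
      (.single (hKK₀.sups hU hKU hLU hLL)) (ih (hKK₀.subset.trans hKU) (hKK₀.isComplex hK))

theorem CollapsesTo.sups (hU : Disjoint U U') (hKU : K ⊆ U.powerset) (hLU : L ⊆ U'.powerset)
    (hK : IsComplex K) (hL : IsComplex L) (hKK : CollapsesTo k K K') (hLL : CollapsesTo l L L') :
    CollapsesTo (k + l) (K ⊻ L) (K' ⊻ L ∪ K ⊻ L') := by
  induction hLL using Relation.ReflTransGen.head_induction_on with
  | refl =>
    rw [union_eq_right.2 (sups_subset_right hKK.subset)]
    exact .refl
  | @head L L₀ hLL₀ _ ih =>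
    have hstep := hKK.sups_elemCollapse hU hKU hLU hK hL hLL₀
    have hrest := ih (hLL₀.subset.trans hLU) (hLL₀.isComplex hL)
    rw [sups_comm K L, sups_comm K' L, union_comm] at hstep ⊢
    rw [sups_comm K L₀] at hstep hrest
    rw [sups_comm K' L₀, union_comm] at hrest
    rw [sups_comm K L'] at hrest ⊢
    exact .sups_trans hU.symm hLU hKU hL (hKK.isComplex hK) hKK.subset hLL₀.subset hstep hrest

theorem collapsible_sups_powerset_union (hU : Disjoint U U') (hKU : K ⊆ U.powerset)
    (hLU : L ⊆ U'.powerset) (hK : IsComplex K) (hL : IsComplex L)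
    (hsimplex : CollapsesTo k U.powerset K) (hKd : Collapsible d K) (hLl : Collapsible l L)
    (hkl : k + l ≤ d) : Collapsible d (K ⊻ U'.powerset ∪ U.powerset ⊻ L) := by
  have hinter : U.powerset ⊻ L ∩ (K ⊻ U'.powerset) ⊆ K ⊻ L := by
    rw [inter_comm]
    exact sups_inter_sups_subset hU hKU Subset.rfl Subset.rfl hLU
  have hright : CollapsesTo (k + l) (U.powerset ⊻ L) (K ⊻ L) := by
    have hjoin := hsimplex.sups hU Subset.rfl hLU (isComplex_powerset U) hL hLl
    rwa [sups_empty, union_empty] at hjoin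
  have hleft : CollapsesTo (d + 0) (K ⊻ U'.powerset) ∅ := by
    have hjoin := CollapsesTo.sups hU hKU Subset.rfl hK (isComplex_powerset U') hKd
      (collapsible_powerset U')
    rwa [empty_sups, sups_empty, union_empty] at hjoin
  have hglue := (hright.mono hkl).union_right (hK.sups (isComplex_powerset U')) hinter
  rw [union_eq_right.2 (sups_subset_left hLU), union_comm] at hglue
  exact hglue.trans hleft

end Join

section Noncovers

variable {α : Type*} {G : SimpleGraph α} {S T : Finset α}

theorem IndepSet.mono (h : IndepSet G T) (hST : S ⊆ T) : IndepSet G S :=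
  fun u hu v hv => h u (hST hu) v (hST hv)

theorem indepSet_insert [DecidableEq α] {y : α} :
    IndepSet G (insert y S) ↔ (∀ u ∈ S, ¬ G.Adj y u) ∧ IndepSet G S := by
  simp only [IndepSet, forall_mem_insert, G.irrefl, not_false_eq_true, true_and]
  exact ⟨fun h => ⟨h.1, fun u hu => (h.2 u hu).2⟩,
    fun h => ⟨h.1, fun u hu => ⟨fun huy => h.1 u hu huy.symm, h.2 u hu⟩⟩⟩

theorem exists_indepSet_dominates (G : SimpleGraph α) (U : Finset α) :
    ∃ F ⊆ U, IndepSet G F ∧ Dominates G F U := by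
  classical
  have hfin : {F | F ⊆ U ∧ IndepSet G F}.Finite :=
    U.powerset.finite_toSet.subset fun F hF => mem_powerset.2 hF.1
  have hempty : ∅ ∈ {F | F ⊆ U ∧ IndepSet G F} :=
    ⟨empty_subset U, fun u hu => absurd hu (notMem_empty u)⟩
  obtain ⟨F, ⟨hFU, hF_indep⟩, hF_max⟩ := hfin.exists_maximal ⟨∅, hempty⟩
  refine ⟨F, hFU, hF_indep, fun a ha => ?_⟩
  by_contra! h
  have h_insert : IndepSet G (insert a F) := by
    rw [indepSet_insert]
    exact ⟨fun u hu hau => h.2 u hu hau.symm, hF_indep⟩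
  exact h.1 (hF_max ⟨insert_subset ha hFU, h_insert⟩ (subset_insert a F) (mem_insert_self a F))

variable [DecidableEq α] {U U' W : Finset α} {y : α} {d k : ℕ}

theorem indepSet_union_of_not_adj (hST : ∀ u ∈ S, ∀ v ∈ T, ¬ G.Adj u v) :
    IndepSet G (S ∪ T) ↔ IndepSet G S ∧ IndepSet G T := by
  refine ⟨fun h => ⟨h.mono subset_union_left, h.mono subset_union_right⟩, ?_⟩
  rintro ⟨hS, hT⟩ u hu v hv
  rcases mem_union.1 hu with hu | hu <;> rcases mem_union.1 hv with hv | hv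
  · exact hS u hu v hv
  · exact hST u hu v hv
  · exact fun huv => hST v hv u hu huv.symm
  · exact hT u hu v hv

open scoped Classical in
/-- The noncover complex of the subgraph of `G` induced on `U`, realized on the vertices of `G` so
that the complexes of different `U` can be joined and compared. -/
noncomputable def noncovers (G : SimpleGraph α) (U : Finset α) : Finset (Finset α) :=
  {W ∈ U.powerset | ¬ IndepSet G (U \ W)}

theorem mem_noncovers : W ∈ noncovers G U ↔ W ⊆ U ∧ ¬ IndepSet G (U \ W) := by
  simp only [noncovers, mem_filter, mem_powerset]

theorem noncovers_subset_powerset : noncovers G U ⊆ U.powerset :=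
  fun _ hW => mem_powerset.2 (mem_noncovers.1 hW).1

theorem isComplex_noncovers : IsComplex (noncovers G U) := by
  intro W hW W' hW'
  rw [mem_noncovers] at hW ⊢
  exact ⟨hW'.trans hW.1, fun h => hW.2 (h.mono (sdiff_subset_sdiff Subset.rfl hW'))⟩

theorem noncovers_union (hU : Disjoint U U') (hadj : ∀ u ∈ U, ∀ v ∈ U', ¬ G.Adj u v) :
    noncovers G (U ∪ U') = noncovers G U ⊻ U'.powerset ∪ U.powerset ⊻ noncovers G U' := by
  ext W
  have hsdiff : IndepSet G ((U ∪ U') \ W) ↔ IndepSet G (U \ W) ∧ IndepSet G (U' \ W) := by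
    rw [union_sdiff_distrib, indepSet_union_of_not_adj]
    exact fun u hu v hv => hadj u (sdiff_subset hu) v (sdiff_subset hv)
  rw [mem_sups_powerset_union_powerset_sups_iff hU noncovers_subset_powerset
    noncovers_subset_powerset, mem_noncovers, mem_noncovers, mem_noncovers, inter_comm W,
    inter_comm W, sdiff_inter_self_left, sdiff_inter_self_left, hsdiff, not_and_or,
    and_iff_right inter_subset_left, and_iff_right inter_subset_left]

theorem mem_powerset_singleton_sups_noncovers_iff (hy : y ∈ U) :
    W ∈ ({y} : Finset α).powerset ⊻ noncovers G (U.erase y) ↔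
      W ⊆ U ∧ ¬ IndepSet G (U.erase y \ W) := by
  have hdisj : Disjoint {y} (U.erase y) := disjoint_singleton_left.2 (notMem_erase y U)
  rw [mem_sups_iff_inter_mem hdisj Subset.rfl noncovers_subset_powerset, ← insert_eq,
    insert_erase hy, mem_noncovers, mem_powerset, inter_comm W (U.erase y), sdiff_inter_self_left,
    and_iff_right inter_subset_right, and_iff_right inter_subset_left]

theorem CollapsesTo.powerset_of_erase (hy : y ∈ U)
    (h : CollapsesTo d (U.erase y).powerset (noncovers G (U.erase y))) :
    CollapsesTo (1 + d) U.powerset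
      ((U.erase y).powerset ∪ ({y} : Finset α).powerset ⊻ noncovers G (U.erase y)) := by
  have hdisj : Disjoint {y} (U.erase y) := disjoint_singleton_left.2 (notMem_erase y U)
  have hssubsets : ({y} : Finset α).ssubsets = {∅} := by
    ext W
    rw [mem_ssubsets, ssubset_singleton_iff, mem_singleton]
  have hempty_sups : {∅} ⊻ (U.erase y).powerset = (U.erase y).powerset := by
    simp only [singleton_sups, sup_eq_union, empty_union, image_id']
  have hjoin := (powerset_collapsesTo_ssubsets {y}).sups hdisj Subset.rfl Subset.rfl
    (isComplex_powerset _) (isComplex_powerset _) h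
  rwa [← powerset_union, ← insert_eq, insert_erase hy, hssubsets, hempty_sups,
    card_singleton] at hjoin

theorem CollapsesTo.powerset_noncovers_of_shedding (hy : y ∈ U)
    (hdel : CollapsesTo d (U.erase y).powerset (noncovers G (U.erase y)))
    (hlink : CollapsesTo k (U.erase y).powerset {W ∈ noncovers G U | y ∉ W}) (hdk : 1 + d ≤ k) :
    CollapsesTo k U.powerset (noncovers G U) := by
  set C := ({y} : Finset α).powerset ⊻ noncovers G (U.erase y) with hC
  have hC_complex : IsComplex C := (isComplex_powerset _).sups isComplex_noncovers
  have hC_subset : C ⊆ noncovers G U := by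
    intro W hW
    rw [hC, mem_powerset_singleton_sups_noncovers_iff hy] at hW
    exact mem_noncovers.2
      ⟨hW.1, fun h => hW.2 (h.mono (sdiff_subset_sdiff (erase_subset y U) Subset.rfl))⟩
  have hunion : {W ∈ noncovers G U | y ∉ W} ∪ C = noncovers G U := by
    refine (union_subset (filter_subset _ _) hC_subset).antisymm fun W hW => ?_
    by_cases hyW : y ∈ W
    · rw [mem_noncovers, ← insert_erase hy, insert_sdiff_of_mem _ hyW, insert_erase hy] at hW
      exact mem_union_right _ ((mem_powerset_singleton_sups_noncovers_iff hy).2 hW)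
    · exact mem_union_left _ (mem_filter.2 ⟨hW, hyW⟩)
  have hinter : (U.erase y).powerset ∩ C ⊆ {W ∈ noncovers G U | y ∉ W} := by
    intro W hW
    rw [mem_inter, mem_powerset, subset_erase] at hW
    exact mem_filter.2 ⟨hC_subset hW.2, hW.1.2⟩
  have hexcise := hlink.union_right hC_complex hinter
  rw [hunion] at hexcise
  exact ((hdel.powerset_of_erase hy).mono hdk).trans hexcise

end Noncovers

section VertexDecomposable

variable {α : Type*} [DecidableEq α] {G : SimpleGraph α} [DecidableRel G.Adj]
  {F U W : Finset α} {y : α} {d k : ℕ}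

/-- The subgraph of `G` induced on `U` is vertex decomposable: it is edgeless, or it has a shedding
vertex `y` (no independent set avoiding the closed neighbourhood of `y` is a maximal independent
set after deleting `y`) such that deleting `y`, or `y` and its neighbours, leaves a
vertex decomposable graph. -/
inductive VertexDecomposable (G : SimpleGraph α) [DecidableRel G.Adj] : Finset α → Prop
  | of_indepSet {U : Finset α} (hU : IndepSet G U) : VertexDecomposable G U
  | of_shedding {U : Finset α} (y : α) (hy : y ∈ U)
      (hshed : ∀ F ⊆ {u ∈ U.erase y | ¬ G.Adj y u}, IndepSet G F → ¬ Dominates G F (U.erase y))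
      (hdel : VertexDecomposable G (U.erase y))
      (hlink : VertexDecomposable G {u ∈ U.erase y | ¬ G.Adj y u}) : VertexDecomposable G U

theorem indepSet_sdiff_iff (hy : y ∈ U) (hyW : y ∉ W) :
    IndepSet G (U \ W) ↔ {u ∈ U.erase y | G.Adj y u} ⊆ W ∧
      IndepSet G ({u ∈ U.erase y | ¬ G.Adj y u} \ W) := by
  have hN : {u ∈ U.erase y | G.Adj y u} ⊆ W ↔ ∀ u ∈ U.erase y \ W, ¬ G.Adj y u := by
    simp only [subset_iff, mem_filter, mem_sdiff]
    grind
  rw [← insert_erase hy, insert_sdiff_of_notMem _ hyW, erase_insert (notMem_erase y U),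
    indepSet_insert, hN]
  refine and_congr_right fun hN => ?_
  have hR : {u ∈ U.erase y | ¬ G.Adj y u} \ W = U.erase y \ W := by
    ext u
    simp only [mem_sdiff, mem_filter]
    exact ⟨fun h => ⟨h.1.1, h.2⟩, fun h => ⟨⟨h.1, hN u (mem_sdiff.2 h)⟩, h.2⟩⟩
  rw [hR]

theorem CollapsesTo.powerset_erase_of_not_adj (hy : y ∈ U)
    (h : CollapsesTo d {u ∈ U.erase y | ¬ G.Adj y u}.powerset
      (noncovers G {u ∈ U.erase y | ¬ G.Adj y u})) :
    CollapsesTo (#{u ∈ U.erase y | G.Adj y u} + d) (U.erase y).powerset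
      {W ∈ noncovers G U | y ∉ W} := by
  set N := {u ∈ U.erase y | G.Adj y u}
  set R := {u ∈ U.erase y | ¬ G.Adj y u}
  have hdisj : Disjoint N R := disjoint_filter_filter_not _ _ _
  have hNR : N ∪ R = U.erase y := filter_union_filter_not_eq _ _
  have hjoin := (powerset_collapsesTo_ssubsets N).sups hdisj Subset.rfl Subset.rfl
    (isComplex_powerset _) (isComplex_powerset _) h
  have hssubsets : N.ssubsets ⊆ N.powerset := fun W hW => mem_powerset.2 (mem_ssubsets.1 hW).subset
  have hdel : N.ssubsets ⊻ R.powerset ∪ N.powerset ⊻ noncovers G R =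
      {W ∈ noncovers G U | y ∉ W} := by
    ext W
    rw [mem_sups_powerset_union_powerset_sups_iff hdisj hssubsets noncovers_subset_powerset, hNR,
      mem_ssubsets, ssubset_iff_subset_ne, and_iff_right inter_subset_right, Ne, inter_eq_right,
      mem_noncovers, inter_comm W, sdiff_inter_self_left, and_iff_right inter_subset_left,
      mem_filter, mem_noncovers, subset_erase, and_right_comm (c := y ∉ W)]
    refine and_congr_right fun hW => ?_
    rw [← not_and_or, indepSet_sdiff_iff hy hW.2]
  rwa [← powerset_union, hNR, hdel] at hjoin

theorem Dominates.insert (h : Dominates G F {u ∈ U.erase y | ¬ G.Adj y u}) :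
    Dominates G (insert y F) U := by
  intro a ha
  rcases eq_or_ne a y with rfl | hay
  · exact .inl (mem_insert_self a F)
  by_cases hya : G.Adj y a
  · exact .inr ⟨y, mem_insert_self y F, hya⟩
  · exact (h a (mem_filter.2 ⟨mem_erase.2 ⟨hay, ha⟩, hya⟩)).imp mem_insert_of_mem
      fun ⟨w, hw, hwa⟩ => ⟨w, mem_insert_of_mem hw, hwa⟩

theorem Dominates.of_shedding (hFU : F ⊆ U.erase y) (hF : IndepSet G F)
    (hshed : ∀ F ⊆ {u ∈ U.erase y | ¬ G.Adj y u}, IndepSet G F → ¬ Dominates G F (U.erase y))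
    (hdom : Dominates G F (U.erase y)) : Dominates G F U := by
  intro a ha
  rcases eq_or_ne a y with rfl | hay
  · by_contra! hF_nbr
    exact hshed F (fun u hu => mem_filter.2 ⟨hFU hu, fun h => hF_nbr.2 u hu h.symm⟩) hF hdom
  · exact hdom a (mem_erase.2 ⟨hay, ha⟩)

theorem VertexDecomposable.powerset_collapsesTo_noncovers (h : VertexDecomposable G U)
    (hk : ∀ F ⊆ U, IndepSet G F → Dominates G F U → #U ≤ k + #F) :
    CollapsesTo k U.powerset (noncovers G U) := by
  induction h generalizing k with
  | @of_indepSet U hU =>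
    have hnoncovers : noncovers G U = ∅ :=
      eq_empty_of_forall_notMem fun W hW => (mem_noncovers.1 hW).2 (hU.mono sdiff_subset)
    rw [hnoncovers]
    exact CollapsesTo.mono k.zero_le (collapsible_powerset U)
  | @of_shedding U y hy hshed _ _ ihdel ihlink =>
    set N := {u ∈ U.erase y | G.Adj y u}
    set R := {u ∈ U.erase y | ¬ G.Adj y u}
    have hcard : #N + #R + 1 = #U := by
      rw [card_filter_add_card_filter_not, card_erase_add_one hy]
    have hdel : ∀ F ⊆ U.erase y, IndepSet G F → Dominates G F (U.erase y) → #U ≤ k + #F :=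
      fun F hFU hF hdom => hk F (hFU.trans (erase_subset y U)) hF (hdom.of_shedding hFU hF hshed)
    have hlink : ∀ F ⊆ R, IndepSet G F → Dominates G F R → #U ≤ k + (#F + 1) := by
      intro F hFR hF hdom
      have hFU : F ⊆ U := hFR.trans ((filter_subset _ _).trans (erase_subset y U))
      have hinsert : IndepSet G (insert y F) :=
        indepSet_insert.2 ⟨fun u hu => (mem_filter.1 (hFR hu)).2, hF⟩
      exact (hk _ (insert_subset hy hFU) hinsert hdom.insert).trans
        (Nat.add_le_add_left (card_insert_le y F) k)
    obtain ⟨F, hFU, hF, hdom⟩ := exists_indepSet_dominates G (U.erase y)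
    obtain ⟨F', hFR, hF', hdom'⟩ := exists_indepSet_dominates G R
    have hk_pos : 1 ≤ k := by
      have := hdel F hFU hF hdom
      have := card_le_card hFU
      have := card_erase_add_one hy
      omega
    have hN : #N ≤ k := by
      have := hlink F' hFR hF' hdom'
      have := card_le_card hFR
      omega
    have hcollapse_del := ihdel (k := k - 1) fun F hFU hF hdom => by
      have := hdel F hFU hF hdom
      have := card_erase_add_one hy
      omega
    have hcollapse_link := ihlink (k := k - #N) fun F hFR hF hdom => by
      have := hlink F hFR hF hdom
      omega
    have hcollapse_erase := hcollapse_link.powerset_erase_of_not_adj hy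
    rw [Nat.add_sub_cancel' hN] at hcollapse_erase
    exact hcollapse_del.powerset_noncovers_of_shedding hy hcollapse_erase (by omega)

end VertexDecomposable

section Chordal

variable {α : Type*} {G : SimpleGraph α} {n : ℕ}

open SimpleGraph in
theorem mem_edges_of_ncard_neighborSet_eq_two {u x y : α} {p : G.Walk u u} (hp : p.IsCycle)
    (hx : x ∈ p.support) (hdeg : (G.neighborSet x).ncard = 2) (hxy : G.Adj x y) :
    s(x, y) ∈ p.edges := by
  have hfin : (G.neighborSet x).Finite := Set.finite_of_ncard_ne_zero (hdeg ▸ two_ne_zero)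
  have hnbr : p.toSubgraph.neighborSet x = G.neighborSet x :=
    Set.eq_of_subset_of_ncard_le (p.toSubgraph.neighborSet_subset x)
      (by rw [hp.ncard_neighborSet_toSubgraph_eq_two hx, hdeg]) hfin
  rw [← Walk.adj_toSubgraph_iff_mem_edges, ← Subgraph.mem_neighborSet, hnbr]
  exact hxy

open SimpleGraph in
theorem IsChordal.isEmpty_cycleGraph_embedding (hG : IsChordal G) (n : ℕ) :
    IsEmpty (cycleGraph (n + 4) ↪g G) := by
  refine ⟨fun φ => ?_⟩
  have hcycle : ((cycleGraph.cycle (n + 1)).map φ.toHom).IsCycle :=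
    (Walk.isCycle_map_iff_of_injective φ.injective).2 cycleGraph.isCycle_cycle
  have hlength : 4 ≤ ((cycleGraph.cycle (n + 1)).map φ.toHom).length := by
    rw [Walk.length_map, cycleGraph.length_cycle]
    omega
  obtain ⟨x, hx, y, hy, hxy, hchord⟩ := hG _ _ hcycle hlength
  rw [Walk.support_map, List.mem_map] at hx hy
  obtain ⟨a, ha, rfl⟩ := hx
  obtain ⟨b, -, rfl⟩ := hy
  have hdeg : ((cycleGraph (n + 4)).neighborSet a).ncard = 2 := by
    rw [Set.ncard_eq_toFinset_card', ← neighborFinset_def, card_neighborFinset_eq_degree,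
      cycleGraph_degree_three_le]
  have hab := mem_edges_of_ncard_neighborSet_eq_two cycleGraph.isCycle_cycle ha hdeg
    (φ.map_adj_iff.1 hxy)
  rw [Walk.edges_map] at hchord
  exact hchord (List.mem_map_of_mem (f := Sym2.map φ.toHom) hab)

theorem cycleGraph_adj_iff_of_lt {a b : Fin n} (hab : a < b) :
    (SimpleGraph.cycleGraph n).Adj a b ↔ b.val = a + 1 ∨ a.val = 0 ∧ b + 1 = n := by
  rw [SimpleGraph.cycleGraph_adj', Fin.sub_val_of_le hab.le, Fin.coe_sub_iff_lt.2 hab]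
  omega

open SimpleGraph in
theorem nonempty_cycleGraph_embedding {m : ℕ} (v : ℕ → α) (hpath : ∀ i, G.Adj (v i) (v (i + 1)))
    (hclose : G.Adj (v 0) (v m))
    (hinduced : ∀ i j, i + 2 ≤ j → j ≤ m → 0 < i ∨ j < m → v i ≠ v j ∧ ¬ G.Adj (v i) (v j)) :
    Nonempty (cycleGraph (m + 1) ↪g G) := by
  have hlt (a b : Fin (m + 1)) (hab : a < b) :
      v a ≠ v b ∧ (G.Adj (v a) (v b) ↔ (cycleGraph (m + 1)).Adj a b) := by
    rw [cycleGraph_adj_iff_of_lt hab]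
    by_cases hsucc : b.val = a + 1
    · rw [hsucc]
      exact ⟨(hpath a).ne, by simp only [hpath a, true_or]⟩
    by_cases hends : a.val = 0 ∧ b.val = m
    · rw [hends.1, hends.2]
      exact ⟨hclose.ne, by simp only [hclose, true_and, or_true]⟩
    · obtain ⟨hne, hnadj⟩ := hinduced a b (by omega) (by omega) (by omega)
      exact ⟨hne, iff_of_false hnadj (by omega)⟩
  refine ⟨⟨⟨fun a => v a, fun a b hab => ?_⟩, fun {a b} => ?_⟩⟩
  · by_contra hne
    rcases lt_or_gt_of_ne hne with h | h
    · exact (hlt a b h).1 hab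
    · exact (hlt b a h).1 hab.symm
  · rcases lt_trichotomy a b with h | rfl | h
    · exact (hlt a b h).2
    · exact iff_of_false (G.irrefl) ((cycleGraph _).irrefl)
    · rw [G.adj_comm, (cycleGraph _).adj_comm]
      exact (hlt b a h).2

/-- A shortest return of the sequence to itself or to a neighbour closes an induced cycle. -/
theorem IsChordal.exists_eq_or_adj_add_two [Finite α] (hG : IsChordal G) (v : ℕ → α)
    (hpath : ∀ i, G.Adj (v i) (v (i + 1))) : ∃ i, v i = v (i + 2) ∨ G.Adj (v i) (v (i + 2)) := by
  classical
  have hreturn : ∃ m, 2 ≤ m ∧ ∃ i, v i = v (i + m) ∨ G.Adj (v i) (v (i + m)) := by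
    obtain ⟨a, b, hab, hv⟩ := Finite.exists_ne_map_eq_of_infinite v
    wlog hlt : a < b generalizing a b
    · exact this b a hab.symm hv.symm (by omega)
    have hne : b ≠ a + 1 := by
      rintro rfl
      exact (hpath a).ne hv
    exact ⟨b - a, by omega, a, .inl (by rw [hv, Nat.add_sub_cancel' hlt.le])⟩
  obtain ⟨hm, i, hi⟩ := Nat.find_spec hreturn
  have hmin : ∀ k, 2 ≤ k → k < Nat.find hreturn →
      ∀ j, v j ≠ v (j + k) ∧ ¬ G.Adj (v j) (v (j + k)) :=
    fun k hk hkm j => not_or.1 fun h => Nat.find_min hreturn hkm ⟨hk, j, h⟩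
  generalize Nat.find hreturn = m at hm hi hmin
  by_contra! hno
  obtain ⟨n, rfl⟩ : ∃ n, m = n + 3 := by
    refine Nat.exists_eq_add_of_le' (hm.lt_of_ne ?_)
    rintro rfl
    exact hi.elim (hno i).1 (hno i).2
  have hclose : G.Adj (v i) (v (i + (n + 3))) := by
    refine hi.resolve_left fun heq => (hmin (n + 2) (by omega) (by omega) i).2 ?_
    rw [heq]
    exact (hpath (i + (n + 2))).symm
  refine not_isEmpty_iff.2 (nonempty_cycleGraph_embedding (fun j => v (i + j))
    (fun j => hpath (i + j)) hclose fun j k hjk hk hends => ?_) (hG.isEmpty_cycleGraph_embedding n)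
  have hspan := hmin (k - j) (by omega) (by omega) (i + j)
  rwa [add_assoc, Nat.add_sub_cancel' (by omega)] at hspan

theorem IsChordal.exists_adj_dominated [Finite α] (hG : IsChordal G) {U : Finset α}
    (hU : ¬ IndepSet G U) :
    ∃ x ∈ U, ∃ y ∈ U, G.Adj x y ∧ ∀ z ∈ U, G.Adj x z → z = y ∨ G.Adj y z := by
  by_contra! h
  have hnext : ∀ x ∈ U, ∀ y ∈ U, G.Adj x y → ∃ z ∈ U, G.Adj y z ∧ z ≠ x ∧ ¬ G.Adj x z :=
    fun x hx y hy hxy => h y hy x hx hxy.symm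
  simp only [IndepSet, not_forall, not_not] at hU
  obtain ⟨a, ha, b, hb, hab⟩ := hU
  have : Nonempty α := ⟨a⟩
  choose! next hnextU hadj hne hnadj using hnext
  let e : ℕ → α × α := fun n => (fun p => (p.2, next p.1 p.2))^[n] (a, b)
  have he_succ (n : ℕ) : e (n + 1) = ((e n).2, next (e n).1 (e n).2) :=
    Function.iterate_succ_apply' _ n _
  have he_edge (n : ℕ) : (e n).1 ∈ U ∧ (e n).2 ∈ U ∧ G.Adj (e n).1 (e n).2 := by
    induction n with
    | zero => exact ⟨ha, hb, hab⟩
    | succ n ih =>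
      rw [he_succ]
      exact ⟨ih.2.1, hnextU _ ih.1 _ ih.2.1 ih.2.2, hadj _ ih.1 _ ih.2.1 ih.2.2⟩
  obtain ⟨n, hn⟩ := hG.exists_eq_or_adj_add_two (fun n => (e n).1) fun n => by
    rw [he_succ]
    exact (he_edge n).2.2
  obtain ⟨hx, hy, hxy⟩ := he_edge n
  simp only [he_succ] at hn
  exact hn.elim (hne _ hx _ hy hxy).symm (hnadj _ hx _ hy hxy)

theorem IsChordal.vertexDecomposable [Finite α] [DecidableEq α] [DecidableRel G.Adj]
    (hG : IsChordal G) (U : Finset α) : VertexDecomposable G U := by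
  induction U using Finset.strongInduction with
  | H U ih =>
    by_cases hU : IndepSet G U
    · exact .of_indepSet hU
    obtain ⟨x, hx, y, hy, hxy, hdom⟩ := hG.exists_adj_dominated hU
    have herase : U.erase y ⊂ U := erase_ssubset hy
    refine .of_shedding y hy (fun F hF _ hFdom => ?_) (ih _ herase)
      (ih _ ((filter_subset _ _).trans_ssubset herase))
    -- `F` must dominate `x`, but every neighbour of `x` lies in the closed neighbourhood of `y`.
    have hnadj : ∀ w ∈ F, ¬ G.Adj y w := fun w hw => (mem_filter.1 (hF hw)).2
    rcases hFdom x (mem_erase.2 ⟨hxy.ne, hx⟩) with hxF | ⟨w, hw, hwx⟩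
    · exact hnadj x hxF hxy.symm
    · have hwU := mem_erase.1 (filter_subset _ _ (hF hw))
      exact (hdom w hwU.2 hwx.symm).elim hwU.1 (hnadj w hw)

end Chordal

section Domination

variable {α : Type*} {G : SimpleGraph α}

theorem gamma_le_card [Fintype α] {W : Finset α} (hW : Dominates G W univ) : gamma G ≤ #W :=
  Nat.sInf_le ⟨W, rfl, hW⟩

theorem exists_dominates_card_eq_gamma [Fintype α] (G : SimpleGraph α) :
    ∃ W : Finset α, #W = gamma G ∧ Dominates G W univ :=
  Nat.sInf_mem (s := {k | ∃ W : Finset α, #W = k ∧ Dominates G W univ})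
    ⟨_, univ, rfl, fun _ ha => .inl ha⟩

theorem gamma_le_card_univ [Fintype α] (G : SimpleGraph α) : gamma G ≤ Fintype.card α :=
  gamma_le_card fun _ ha => .inl ha

theorem gamma_induce_le_card {s : Set α} [Fintype s] {F : Finset α} (hF : F ⊆ s.toFinset)
    (hdom : Dominates G F s.toFinset) : gamma (G.induce s) ≤ #F := by
  classical
  have hcard : #(F.subtype (· ∈ s)) ≤ #F := (card_subtype _ F).trans_le (card_filter_le F _)
  refine (gamma_le_card fun a _ => ?_).trans hcard
  simp only [mem_subtype]
  refine (hdom a (Set.mem_toFinset.2 a.2)).imp id fun ⟨w, hw, hwa⟩ => ?_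
  exact ⟨⟨w, Set.mem_toFinset.1 (hF hw)⟩, hw, hwa⟩

theorem gamma_le_sum_gamma_induce [Fintype α] {ι : Type*} [Fintype ι] (G : SimpleGraph α)
    (s : ι → Set α) [∀ i, Fintype (s i)] (hs : ∀ a, ∃ i, a ∈ s i) :
    gamma G ≤ ∑ i, gamma (G.induce (s i)) := by
  classical
  choose W hW_card hW_dom using fun i => exists_dominates_card_eq_gamma (G.induce (s i))
  calc
    gamma G ≤ #(univ.biUnion fun i => (W i).map (.subtype (· ∈ s i))) := by
      refine gamma_le_card fun a _ => ?_
      obtain ⟨i, hi⟩ := hs a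
      have hmem : ∀ b ∈ W i, b.1 ∈ univ.biUnion fun i => (W i).map (.subtype (· ∈ s i)) :=
        fun b hb => mem_biUnion.2 ⟨i, mem_univ i, mem_map_of_mem _ hb⟩
      exact (hW_dom i ⟨a, hi⟩ (mem_univ _)).imp (hmem _) fun ⟨w, hw, hwa⟩ => ⟨w, hmem w hw, hwa⟩
    _ ≤ ∑ i, #((W i).map (.subtype (· ∈ s i))) := card_biUnion_le
    _ = ∑ i, gamma (G.induce (s i)) := by simp only [card_map, hW_card]

end Domination

section Gluing

variable {α β : Type*} {G : SimpleGraph α} {U U' : Finset α} {e e' : ℕ}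

theorem IndepSet.map_iff {H : SimpleGraph β} (φ : H ↪g G) {S : Finset β} :
    IndepSet G (S.map φ.toEmbedding) ↔ IndepSet H S := by
  simp only [IndepSet, forall_mem_map, RelEmbedding.coe_toEmbedding, φ.map_adj_iff]

variable [DecidableEq α]

theorem map_NC_eq_noncovers [Fintype β] [DecidableEq β] {H : SimpleGraph β} [DecidableRel H.Adj]
    (φ : H ↪g G) :
    (NC H).map (mapEmbedding φ.toEmbedding).toEmbedding =
      noncovers G (univ.map φ.toEmbedding) := by
  have hcompl (S : Finset β) : (Sᶜ).map φ.toEmbedding =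
      univ.map φ.toEmbedding \ S.map φ.toEmbedding := by rw [compl_eq_univ_sdiff, Finset.map_sdiff]
  ext W
  simp only [mem_map, NC, mem_filter, mem_univ, true_and, mem_noncovers,
    RelEmbedding.coe_toEmbedding, mapEmbedding_apply]
  constructor
  · rintro ⟨S, hS, rfl⟩
    rw [← hcompl, IndepSet.map_iff]
    exact ⟨map_subset_map.2 (subset_univ S), hS⟩
  · rintro ⟨hW, hindep⟩
    obtain ⟨S, -, rfl⟩ := subset_map_iff.1 hW
    rw [← hcompl, IndepSet.map_iff] at hindep
    exact ⟨S, hindep, rfl⟩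

theorem noncovers_univ [Fintype α] [DecidableRel G.Adj] : noncovers G univ = NC G := by
  ext W
  rw [mem_noncovers, NC, mem_filter, compl_eq_univ_sdiff]
  simp only [subset_univ, mem_univ]

theorem noncovers_empty : noncovers G ∅ = ∅ :=
  eq_empty_of_forall_notMem fun _ hW => (mem_noncovers.1 hW).2 fun u hu =>
    absurd (sdiff_subset hu) (notMem_empty u)

/-- The two reductions of noncover complexes that are passed from components to the whole graph:
the full simplex on `U` collapses to `noncovers G U`, which collapses to the void complex in
dimension one less. At `e = 0` the first one already forces `noncovers G U` to be void, so the
truncation in `e - 1` is harmless. -/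
structure NoncoversCollapse (e : ℕ) (G : SimpleGraph α) (U : Finset α) : Prop where
  powerset : CollapsesTo e U.powerset (noncovers G U)
  collapsible : Collapsible (e - 1) (noncovers G U)

namespace NoncoversCollapse

theorem collapsible_union (hU : Disjoint U U') (hadj : ∀ u ∈ U, ∀ v ∈ U', ¬ G.Adj u v)
    (h : NoncoversCollapse e G U) (h' : NoncoversCollapse e' G U') (he : e' = 0 → e = 0) :
    Collapsible (e + e' - 1) (noncovers G (U ∪ U')) := by
  rw [noncovers_union hU hadj]
  exact collapsible_sups_powerset_union hU noncovers_subset_powerset noncovers_subset_powerset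
    isComplex_noncovers isComplex_noncovers h.powerset (CollapsesTo.mono (by omega) h.collapsible)
    h'.collapsible (by omega)

theorem union (hU : Disjoint U U') (hadj : ∀ u ∈ U, ∀ v ∈ U', ¬ G.Adj u v)
    (h : NoncoversCollapse e G U) (h' : NoncoversCollapse e' G U') :
    NoncoversCollapse (e + e') G (U ∪ U') where
  powerset := by
    rw [noncovers_union hU hadj, powerset_union]
    exact h.powerset.sups hU Subset.rfl Subset.rfl (isComplex_powerset U) (isComplex_powerset U')
      h'.powerset
  collapsible := by
    by_cases he : e' = 0 → e = 0
    · exact h.collapsible_union hU hadj h' he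
    · rw [union_comm, add_comm]
      exact h'.collapsible_union hU.symm (fun u hu v hv huv => hadj v hv u hu huv.symm) h
        (by omega)

theorem biUnion {ι : Type*} {s : Finset ι} {U : ι → Finset α} {e : ι → ℕ}
    (hU : ∀ i j, i ≠ j → Disjoint (U i) (U j))
    (hadj : ∀ i j, i ≠ j → ∀ u ∈ U i, ∀ v ∈ U j, ¬ G.Adj u v)
    (h : ∀ i, NoncoversCollapse (e i) G (U i)) :
    NoncoversCollapse (∑ i ∈ s, e i) G (s.biUnion U) := by
  classical
  induction s using Finset.induction_on with
  | empty =>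
    rw [biUnion_empty, sum_empty]
    exact ⟨noncovers_empty (G := G) ▸ collapsible_powerset ∅, noncovers_empty (G := G) ▸ .refl⟩
  | insert i s hi ih =>
    rw [sum_insert hi, biUnion_insert]
    have hne : ∀ j ∈ s, i ≠ j := fun j hj => (ne_of_mem_of_not_mem hj hi).symm
    refine (h i).union ((disjoint_biUnion_right _ _ _).2 fun j hj => hU i j (hne j hj)) ?_ ih
    intro u hu v hv
    obtain ⟨j, hj, hvj⟩ := mem_biUnion.1 hv
    exact hadj i j (hne j hj) u hu v hvj

theorem of_NC_induce {s : Set α} [Fintype s] [DecidableEq s] [DecidableRel (G.induce s).Adj]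
    (hpowerset : CollapsesTo e s.toFinset.powerset (noncovers G s.toFinset))
    (hcollapsible : Collapsible (e - 1) (NC (G.induce s))) :
    NoncoversCollapse e G s.toFinset := by
  refine ⟨hpowerset, ?_⟩
  have hmap := CollapsesTo.map (SimpleGraph.Embedding.induce (G := G) s).toEmbedding hcollapsible
  rw [map_NC_eq_noncovers, map_empty] at hmap
  exact hmap

end NoncoversCollapse

end Gluing

section Components

variable {α : Type*} {G : SimpleGraph α}

theorem disjoint_toFinset_supp {c c' : G.ConnectedComponent} [Fintype c.supp] [Fintype c'.supp]
    (h : c ≠ c') : Disjoint c.supp.toFinset c'.supp.toFinset :=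
  Set.disjoint_toFinset.2 (G.pairwise_disjoint_supp_connectedComponent h)

theorem not_adj_of_mem_toFinset_supp {c c' : G.ConnectedComponent} [Fintype c.supp]
    [Fintype c'.supp] (h : c ≠ c') :
    ∀ u ∈ c.supp.toFinset, ∀ v ∈ c'.supp.toFinset, ¬ G.Adj u v := fun _ hu _ hv huv =>
  h (SimpleGraph.ConnectedComponent.eq_of_common_vertex
    (c.mem_supp_of_adj_mem_supp (Set.mem_toFinset.1 hu) huv) (Set.mem_toFinset.1 hv))

variable [Fintype G.ConnectedComponent] [∀ c : G.ConnectedComponent, Fintype c.supp]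

theorem biUnion_toFinset_supp [Fintype α] [DecidableEq α] :
    (univ.biUnion fun c : G.ConnectedComponent => c.supp.toFinset) = univ := by
  rw [← Set.toFinset_iUnion]
  simp only [G.iUnion_connectedComponentSupp, Set.toFinset_univ]

theorem sum_card_supp_sub_gamma_le [Fintype α] :
    ∑ c : G.ConnectedComponent, (Fintype.card c.supp - gamma (G.induce c.supp)) ≤
      Fintype.card α - gamma G := by
  classical
  have hcard : ∑ c : G.ConnectedComponent, Fintype.card c.supp = Fintype.card α := by
    simp only [← Set.toFinset_card]
    rw [← card_biUnion fun c _ c' _ h => disjoint_toFinset_supp h, biUnion_toFinset_supp,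
      card_univ]
  calc
    ∑ c : G.ConnectedComponent, (Fintype.card c.supp - gamma (G.induce c.supp)) =
        Fintype.card α - ∑ c : G.ConnectedComponent, gamma (G.induce c.supp) := by
      rw [sum_tsub_distrib _ fun c _ => gamma_le_card_univ _, hcard]
    _ ≤ Fintype.card α - gamma G := Nat.sub_le_sub_left
      (gamma_le_sum_gamma_induce G _ fun a => ⟨G.connectedComponentMk a, rfl⟩) _

end Components

open scoped Classical in
theorem noncover_collapsible_of_components_general (G : SimpleGraph V) [DecidableRel G.Adj]
    (hG : ∀ c : G.ConnectedComponent, VertexDecomposable G c.supp.toFinset)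
    (hcomp : ∀ c : G.ConnectedComponent,
      Collapsible (Fintype.card c.supp - gamma (G.induce c.supp) - 1)
        (NC (G.induce c.supp))) :
    Collapsible (Fintype.card V - gamma G - 1) (NC G) := by
  have hcomponent (c : G.ConnectedComponent) :
      NoncoversCollapse (Fintype.card c.supp - gamma (G.induce c.supp)) G c.supp.toFinset := by
    refine .of_NC_induce ((hG c).powerset_collapsesTo_noncovers fun F hFc _ hdom => ?_) (hcomp c)
    have hgamma := gamma_induce_le_card hFc hdom
    rw [Set.toFinset_card]
    omega
  have hglue := NoncoversCollapse.biUnion (s := univ) (fun _ _ => disjoint_toFinset_supp)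
    (fun _ _ => not_adj_of_mem_toFinset_supp) hcomponent
  have hcollapsible := hglue.collapsible
  rw [biUnion_toFinset_supp, noncovers_univ] at hcollapsible
  exact CollapsesTo.mono (Nat.sub_le_sub_right sum_card_supp_sub_gamma_le 1) hcollapsible

open scoped Classical in
/-- If `NC(H)` is `(|V(H)| - γ(H) - 1)`-collapsible for every connected
component `H` of a chordal graph `G` with no isolated vertices, then `NC(G)` is
`(n - γ(G) - 1)`-collapsible. -/
theorem noncover_collapsible_of_components (G : SimpleGraph V) [DecidableRel G.Adj]
    (hG : IsChordal G) (hiso : ∀ v : V, ∃ u, G.Adj v u)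
    (hcomp : ∀ c : G.ConnectedComponent,
      Collapsible (Fintype.card c.supp - gamma (G.induce c.supp) - 1)
        (NC (G.induce c.supp))) :
    Collapsible (Fintype.card V - gamma G - 1) (NC G) :=
  noncover_collapsible_of_components_general G (fun _ => hG.vertexDecomposable _) hcomp
end
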